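/- Let X be an X-valued stochastic process satisfying the tightness/equicontinuity condition: for all [a,b] ⊂ ℝ, ε > 0, η > 0, there exists δ > 0 such that for all r ∈ ℝ, P{ sup_{|t−s|<δ, t,s∈[a,b]} d(X(r+t), X(r+s)) > η } < ε. Then X is almost automorphic in finite dimensional distributions if and only if X is almost automorphic in distribution (i.e., t ↦ Law(X(t+·)) is almost automorphic in P(C_k(ℝ, X))). -/

import Mathlib

open Filter Topology MeasureTheory Set

/-- `f : ℝ → X` is almost automorphic. -/
def IsAlmostAutomorphic {X : Type*} [TopologicalSpace X] (f : ℝ → X) : Prop :=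
  ∀ t' : ℕ → ℝ, ∃ φ : ℕ → ℕ, StrictMono φ ∧ ∃ g : ℝ → X,
    (∀ t : ℝ, Tendsto (fun n => f (t + t' (φ n))) atTop (𝓝 (g t))) ∧
    (∀ t : ℝ, Tendsto (fun n => g (t - t' (φ n))) atTop (𝓝 (f t)))

/-- Translation of a continuous path: `shift t x = x(t + ·)`. -/
noncomputable def shift {E : Type*} [MetricSpace E] (t : ℝ) (x : C(ℝ, E)) : C(ℝ, E) :=
  x.comp ⟨fun s => t + s, by continuity⟩


lemma aa_isCompact_closure {Y : Type*} [TopologicalSpace Y] [TopologicalSpace.MetrizableSpace Y]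
    {S : Set Y} (h : ∀ x : ℕ → Y, (∀ n, x n ∈ S) →
      ∃ φ : ℕ → ℕ, StrictMono φ ∧ ∃ y, Tendsto (x ∘ φ) atTop (𝓝 y)) :
    IsCompact (closure S) := by
  let := TopologicalSpace.metrizableSpaceMetric Y
  apply IsSeqCompact.isCompact
  intro y hy
  have : ∀ n : ℕ, ∃ x ∈ S, dist (y n) x < 1 / ((n : ℝ) + 1) := fun n =>
    Metric.mem_closure_iff.1 (hy n) _ (by positivity)
  choose x hxS hx using this
  obtain ⟨φ, hφ, z, hz⟩ := h x hxS
  have hd : Tendsto (fun n => dist (y n) (x n)) atTop (𝓝 0) :=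
    squeeze_zero (fun _ => dist_nonneg) (fun n => (hx n).le) tendsto_one_div_add_atTop_nhds_zero_nat
  have hz' : Tendsto (y ∘ φ) atTop (𝓝 z) := by
    rw [tendsto_iff_dist_tendsto_zero] at hz ⊢
    have := (hd.comp hφ.tendsto_atTop).add hz
    rw [add_zero] at this
    exact squeeze_zero (fun _ => dist_nonneg) (fun n => dist_triangle _ _ _) this
  exact ⟨z, isClosed_closure.mem_of_tendsto hz' (Eventually.of_forall fun n => hy _), φ, hφ, hz'⟩

/-- Arzelà–Ascoli in the path space. -/
lemma aa_ascoli {E : Type*} [MetricSpace E] [CompleteSpace E] (K : ℚ → Set E)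
    (hK : ∀ q, IsCompact (K q)) (δ : ℕ → ℝ) (hδ : ∀ n, 0 < δ n) :
    IsCompact (closure {x : C(ℝ, E) | (∀ q : ℚ, x q ∈ K q) ∧ ∀ n : ℕ,
      ∀ t ∈ Set.Icc (-(n : ℝ)) n, ∀ s ∈ Set.Icc (-(n : ℝ)) n, |t - s| < δ n →
        dist (x t) (x s) ≤ 1 / ((n : ℝ) + 1)}) := by
  set Q := {x : C(ℝ, E) | (∀ q : ℚ, x q ∈ K q) ∧ ∀ n : ℕ,
      ∀ t ∈ Set.Icc (-(n : ℝ)) n, ∀ s ∈ Set.Icc (-(n : ℝ)) n, |t - s| < δ n →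
        dist (x t) (x s) ≤ 1 / ((n : ℝ) + 1)} with hQ
  -- local equicontinuity
  have key : ∀ t : ℝ, ∀ ε > 0, ∃ r > 0, ∀ s, |s - t| < r → ∀ x ∈ Q, dist (x t) (x s) < ε := by
    intro t ε hε
    obtain ⟨n₁, hn₁⟩ := exists_nat_one_div_lt hε
    obtain ⟨n₂, hn₂⟩ := exists_nat_gt (|t| + 1)
    set n := max n₁ n₂
    have h1 : (n₁ : ℝ) ≤ n := by exact_mod_cast le_max_left _ _
    have h2 : (n₂ : ℝ) ≤ n := by exact_mod_cast le_max_right _ _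
    refine ⟨min 1 (δ n), lt_min one_pos (hδ n), fun s hs x hx => ?_⟩
    have hs1 := hs.trans_le (min_le_left _ _)
    have hs2 := hs.trans_le (min_le_right _ _)
    have ht0 := abs_le.1 (le_refl |t|)
    have hs0 := abs_lt.1 hs1
    have := hx.2 n t ⟨by linarith, by linarith⟩ s ⟨by linarith, by linarith⟩
      (by rwa [abs_sub_comm])
    refine this.trans_lt (lt_of_le_of_lt ?_ hn₁)
    exact one_div_le_one_div_of_le (by positivity) (by linarith)
  refine ArzelaAscoli.isCompact_closure_of_isClosedEmbedding (𝔖 := {K : Set ℝ | IsCompact K})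
    (F := fun (x : C(ℝ, E)) => (x : ℝ → E)) (fun _ h => h) ?_ ?_ ?_
  · have : T2Space (UniformOnFun ℝ E {K : Set ℝ | IsCompact K}) :=
      UniformOnFun.t2Space_of_covering (eq_univ_iff_forall.mpr
        (fun x => mem_sUnion_of_mem (mem_singleton x) isCompact_singleton))
    exact ⟨ContinuousMap.isUniformEmbedding_toUniformOnFunIsCompact.isEmbedding,
      (ContinuousMap.isUniformEmbedding_toUniformOnFunIsCompact.isUniformInducing.isComplete_range
        ).isClosed⟩
  · intro C _
    apply Equicontinuous.equicontinuousOn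
    intro t
    rw [Metric.equicontinuousAt_iff]
    intro ε hε
    obtain ⟨r, hr, h⟩ := key t ε hε
    exact ⟨r, hr, fun s hs x => h s (by simpa [Real.dist_eq] using hs) x.1 x.2⟩
  · intro _ _ t _
    refine ⟨closure ((fun x : C(ℝ, E) => x t) '' Q), ?_, fun x hx => subset_closure ⟨x, hx, rfl⟩⟩
    refine TotallyBounded.isCompact_of_isClosed ?_ isClosed_closure
    apply TotallyBounded.closure
    rw [Metric.totallyBounded_iff]
    intro ε hε
    obtain ⟨r, hr, h⟩ := key t (ε / 2) (by positivity)
    obtain ⟨q, hq1, hq2⟩ := exists_rat_btwn (show t < t + r by linarith)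
    obtain ⟨T, hT, hKT⟩ := Metric.totallyBounded_iff.1 (hK q).totallyBounded (ε / 2) (by positivity)
    refine ⟨T, hT, ?_⟩
    rintro _ ⟨x, hx, rfl⟩
    obtain ⟨y, hy, hxy⟩ := mem_iUnion₂.1 (hKT (hx.1 q))
    refine mem_iUnion₂.2 ⟨y, hy, ?_⟩
    have := h q (by rw [abs_lt]; constructor <;> linarith) x hx
    rw [Metric.mem_ball] at hxy ⊢
    linarith [dist_triangle (x t) (x q) y]

/-- The Borel measure on path space is determined by finite dimensional distributions. -/
lemma aa_ext {E : Type*} [MetricSpace E] [CompleteSpace E] [SecondCountableTopology E]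
    [MeasurableSpace E] [BorelSpace E] [MeasurableSpace C(ℝ, E)] [BorelSpace C(ℝ, E)]
    (μ ν : Measure C(ℝ, E)) [IsProbabilityMeasure μ] [IsProbabilityMeasure ν]
    (h : ∀ (m : ℕ) (ts : Fin m → ℝ), μ.map (fun x i => x (ts i)) = ν.map (fun x i => x (ts i))) :
    μ = ν := by
  have : PolishSpace C(ℝ, E) := by
    have : TopologicalSpace.IsCompletelyMetrizableSpace C(ℝ, E) := by
      let := UniformSpace.metricSpace C(ℝ, E)
      infer_instance
    infer_instance
  set F : C(ℝ, E) → (ℚ → E) := fun x q => x q with hF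
  have hFc : Continuous F := by fun_prop
  have hFi : Function.Injective F := by
    intro x y hxy
    apply DFunLike.coe_injective
    refine Continuous.ext_on Rat.denseRange_cast x.continuous y.continuous ?_
    rintro _ ⟨q, rfl⟩
    exact congrFun hxy q
  have hFe : MeasurableEmbedding F := hFc.measurableEmbedding hFi
  have hmap : μ.map F = ν.map F := by
    have : IsProbabilityMeasure (ν.map F) :=
      Measure.isProbabilityMeasure_map hFc.measurable.aemeasurable
    refine IsProjectiveLimit.unique (P := fun I : Finset ℚ => (ν.map F).map I.restrict) ?_
      (fun I => rfl)
    intro I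
    let e := I.equivFin
    have := congrArg (Measure.map (fun (f : Fin I.card → E) (i : I) => f (e i)))
      (h I.card (fun i => ((e.symm i : ℚ) : ℝ)))
    have hm1 : Measurable (fun (f : Fin I.card → E) (i : I) => f (e i)) := by fun_prop
    have hm2 : Measurable (fun (x : C(ℝ, E)) (i : Fin I.card) => x ((e.symm i : ℚ) : ℝ)) :=
      Continuous.measurable (by fun_prop)
    have hm3 : Measurable (I.restrict : (ℚ → E) → (I → E)) := by fun_prop
    rw [Measure.map_map hm1 hm2, Measure.map_map hm1 hm2] at this
    dsimp only
    rw [Measure.map_map hm3 hFc.measurable, Measure.map_map hm3 hFc.measurable]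
    convert this using 2 <;>
    · funext x i
      simp [F, Function.comp_def]
  rw [← hFe.comap_map μ, hmap, hFe.comap_map]

lemma aa_continuous_shift {E : Type*} [MetricSpace E] (t : ℝ) :
    Continuous (shift t : C(ℝ, E) → C(ℝ, E)) :=
  ContinuousMap.continuous_precomp _

lemma aa_shift_shift {E : Type*} [MetricSpace E] (s t : ℝ) (x : C(ℝ, E)) :
    shift s (shift t x) = shift (t + s) x := by
  ext u
  simp [shift, add_assoc]

lemma aa_tight {E Ω : Type*} [MetricSpace E] [CompleteSpace E] [SecondCountableTopology E]
    [MeasurableSpace E] [BorelSpace E]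
    [MeasurableSpace C(ℝ, E)] [BorelSpace C(ℝ, E)]
    [MeasurableSpace Ω] (P : Measure Ω) [IsProbabilityMeasure P]
    (Xp : Ω → C(ℝ, E)) (hXp : Measurable Xp)
    (htight : ∀ a b : ℝ, ∀ ε : ℝ, 0 < ε → ∀ η : ℝ, 0 < η → ∃ δ : ℝ, 0 < δ ∧ ∀ r : ℝ,
      P {ω | ∃ t ∈ Set.Icc a b, ∃ s ∈ Set.Icc a b,
          |t - s| < δ ∧ η < dist (Xp ω (r + t)) (Xp ω (r + s))}
        < ENNReal.ofReal ε)
    (L : ℝ → ProbabilityMeasure (Fin 1 → E)) (hAA : IsAlmostAutomorphic L)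
    (hL : ∀ t : ℝ, (L t : Measure (Fin 1 → E)) = Measure.map (fun ω _ => Xp ω t) P) :
    IsTightMeasureSet (range fun t : ℝ => Measure.map (fun ω => shift t (Xp ω)) P) := by
  have hsm : ∀ t : ℝ, Measurable (fun ω => shift t (Xp ω)) := fun t =>
    (aa_continuous_shift t).measurable.comp hXp
  have hLc : IsCompact (closure (range L)) := by
    apply aa_isCompact_closure
    intro x hx
    choose t' ht' using hx
    obtain ⟨φ, hφ, g, hg, -⟩ := hAA t'
    refine ⟨φ, hφ, g 0, (hg 0).congr fun n => ?_⟩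
    simp [ht']
  have hLt := isTightMeasureSet_of_isCompact_closure hLc
  rw [isTightMeasureSet_iff_exists_isCompact_measure_compl_le] at hLt ⊢
  have hpt : ∀ ε : ENNReal, 0 < ε → ∃ K : Set E, IsCompact K ∧ ∀ t, P {ω | Xp ω t ∉ K} ≤ ε := by
    intro ε hε
    obtain ⟨K, hK, hKε⟩ := hLt ε hε
    refine ⟨(fun f => f 0) '' K, hK.image (by fun_prop), fun t => ?_⟩
    have h1 := hKε (L t) ⟨L t, ⟨t, rfl⟩, rfl⟩
    have hm : Measurable (fun ω (_ : Fin 1) => Xp ω t) :=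
      (show Continuous (fun (x : C(ℝ, E)) (_ : Fin 1) => x t) by fun_prop).measurable.comp hXp
    rw [hL, Measure.map_apply hm hK.isClosed.isOpen_compl.measurableSet] at h1
    refine (measure_mono ?_).trans h1
    intro ω hω hK'
    exact hω ⟨_, hK', rfl⟩
  intro ε hε
  obtain ⟨ε', hε', hsum⟩ := ENNReal.exists_pos_sum_of_countable hε.ne' (ℚ ⊕ ℕ)
  choose K hK hKε using fun q : ℚ => hpt (ε' (Sum.inl q)) (by exact_mod_cast hε' _)
  choose δ hδ hδε using fun n : ℕ => htight (-(n : ℝ)) n (ε' (Sum.inr n))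
    (by exact_mod_cast hε' _) (1 / ((n : ℝ) + 1)) (by positivity)
  refine ⟨_, aa_ascoli K hK δ hδ, ?_⟩
  rintro _ ⟨r, rfl⟩
  rw [Measure.map_apply (hsm r) isClosed_closure.isOpen_compl.measurableSet]
  let B : ℚ ⊕ ℕ → Set Ω := Sum.elim (fun q => {ω | Xp ω (r + q) ∉ K q})
    (fun n => {ω | ∃ t ∈ Set.Icc (-(n : ℝ)) n, ∃ s ∈ Set.Icc (-(n : ℝ)) n,
          |t - s| < δ n ∧ 1 / ((n : ℝ) + 1) < dist (Xp ω (r + t)) (Xp ω (r + s))})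
  refine (measure_mono (t := ⋃ i, B i) ?_).trans
    ((measure_iUnion_le B).trans ((ENNReal.tsum_le_tsum ?_).trans hsum.le))
  · intro ω hω
    by_contra hB
    apply hω
    apply subset_closure
    simp only [mem_iUnion, not_exists] at hB
    refine ⟨fun q => ?_, fun n t ht s hs hts => ?_⟩
    · by_contra hq
      exact hB (Sum.inl q) hq
    · by_contra hq
      exact hB (Sum.inr n) ⟨t, ht, s, hs, hts, not_le.1 hq⟩
  · rintro (q | n)
    · exact hKε q _
    · refine (hδε n r).le.trans ?_
      rw [ENNReal.ofReal_coe_nnreal]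

/-- Under the tightness/equicontinuity condition, a process is almost
automorphic in finite dimensional distributions iff it is almost automorphic in
distribution (on path space). -/
theorem stmt_16 {E Ω : Type*} [MetricSpace E] [CompleteSpace E] [SecondCountableTopology E]
    [MeasurableSpace E] [BorelSpace E]
    [MeasurableSpace C(ℝ, E)] [BorelSpace C(ℝ, E)]
    [MeasurableSpace Ω] (P : Measure Ω) [IsProbabilityMeasure P]
    (Xp : Ω → C(ℝ, E)) (hXp : Measurable Xp)
    (htight : ∀ a b : ℝ, ∀ ε : ℝ, 0 < ε → ∀ η : ℝ, 0 < η → ∃ δ : ℝ, 0 < δ ∧ ∀ r : ℝ,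
      P {ω | ∃ t ∈ Set.Icc a b, ∃ s ∈ Set.Icc a b,
          |t - s| < δ ∧ η < dist (Xp ω (r + t)) (Xp ω (r + s))}
        < ENNReal.ofReal ε)
    (Lfd : (m : ℕ) → (Fin m → ℝ) → ℝ → ProbabilityMeasure (Fin m → E))
    (hLfd : ∀ (m : ℕ) (ts : Fin m → ℝ) (t : ℝ),
      (Lfd m ts t : Measure (Fin m → E)) = Measure.map (fun ω i => Xp ω (t + ts i)) P)
    (Lpath : ℝ → ProbabilityMeasure C(ℝ, E))
    (hLpath : ∀ t : ℝ,
      (Lpath t : Measure C(ℝ, E)) = Measure.map (fun ω => shift t (Xp ω)) P) :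
    (∀ (m : ℕ) (ts : Fin m → ℝ), IsAlmostAutomorphic (Lfd m ts)) ↔
      IsAlmostAutomorphic Lpath := by
  have hev : ∀ (m : ℕ) (ts : Fin m → ℝ),
      Continuous (fun (x : C(ℝ, E)) (i : Fin m) => x (ts i)) := fun m ts => by fun_prop
  have hsm : ∀ t : ℝ, Measurable (fun ω => shift t (Xp ω)) := fun t =>
    (aa_continuous_shift t).measurable.comp hXp
  -- push-forwards
  let Φ : (m : ℕ) → (Fin m → ℝ) → ProbabilityMeasure C(ℝ, E) → ProbabilityMeasure (Fin m → E) :=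
    fun m ts μ => μ.map (hev m ts).measurable.aemeasurable
  have hΦ : ∀ m ts, Continuous (Φ m ts) := fun m ts => ProbabilityMeasure.continuous_map (hev m ts)
  let Θ : ℝ → ProbabilityMeasure C(ℝ, E) → ProbabilityMeasure C(ℝ, E) :=
    fun t μ => μ.map (aa_continuous_shift t).measurable.aemeasurable
  have hΘ : ∀ t, Continuous (Θ t) := fun t =>
    ProbabilityMeasure.continuous_map (aa_continuous_shift t)
  have hΦL : ∀ m ts t, Φ m ts (Lpath t) = Lfd m ts t := by
    intro m ts t
    apply ProbabilityMeasure.toMeasure_injective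
    rw [ProbabilityMeasure.toMeasure_map, hLpath, hLfd,
      Measure.map_map (hev m ts).measurable (hsm t)]
    rfl
  have hΘΘ : ∀ s t μ, Θ s (Θ t μ) = Θ (t + s) μ := by
    intro s t μ
    apply ProbabilityMeasure.toMeasure_injective
    rw [ProbabilityMeasure.toMeasure_map, ProbabilityMeasure.toMeasure_map,
      ProbabilityMeasure.toMeasure_map, Measure.map_map (aa_continuous_shift s).measurable
        (aa_continuous_shift t).measurable]
    congr 1
    funext x
    exact aa_shift_shift s t x
  have hΘL : ∀ s t, Θ s (Lpath t) = Lpath (t + s) := by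
    intro s t
    apply ProbabilityMeasure.toMeasure_injective
    rw [ProbabilityMeasure.toMeasure_map, hLpath, hLpath,
      Measure.map_map (aa_continuous_shift s).measurable (hsm t)]
    congr 1
    funext ω
    exact aa_shift_shift s t (Xp ω)
  constructor
  swap
  · intro h m ts t'
    obtain ⟨φ, hφ, g, h1, h2⟩ := h t'
    refine ⟨φ, hφ, fun t => Φ m ts (g t), fun t => ?_, fun t => ?_⟩
    · simp only [← hΦL]
      exact ((hΦ m ts).tendsto _).comp (h1 t)
    · rw [← hΦL]
      exact ((hΦ m ts).tendsto _).comp (h2 t)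
  intro h t'
  have hcomp : IsCompact (closure (range Lpath)) := by
    apply isCompact_closure_of_isTightMeasureSet
    refine (aa_tight P Xp hXp htight (Lfd 1 (fun _ => 0)) ?_ ?_).subset ?_
    · exact h 1 _
    · intro t; simpa using hLfd 1 (fun _ => 0) t
    · rintro _ ⟨_, ⟨t, rfl⟩, rfl⟩
      exact ⟨t, (hLpath t).symm⟩
  obtain ⟨μ, -, φ, hφ, hμ⟩ := hcomp.tendsto_subseq (x := fun n => Lpath (t' n))
    (fun n => subset_closure ⟨_, rfl⟩)
  have hg : ∀ t, Tendsto (fun n => Lpath (t + t' (φ n))) atTop (𝓝 (Θ t μ)) := by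
    intro t
    have := ((hΘ t).tendsto μ).comp hμ
    refine this.congr fun n => ?_
    simp only [Function.comp_apply, hΘL, add_comm]
  have hgc : ∀ t, Θ t μ ∈ closure (range Lpath) := fun t =>
    mem_closure_of_tendsto (hg t) (Eventually.of_forall fun n => ⟨_, rfl⟩)
  have h0 : Tendsto (fun n => Θ (-t' (φ n)) μ) atTop (𝓝 (Lpath 0)) := by
    apply tendsto_of_subseq_tendsto
    intro ns hns
    obtain ⟨ν, -, θ, hθ, hν⟩ := hcomp.tendsto_subseq (x := fun n => Θ (-t' (φ (ns n))) μ)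
      (fun n => hgc _)
    refine ⟨θ, ?_⟩
    have hνL : ν = Lpath 0 := by
      apply ProbabilityMeasure.toMeasure_injective
      apply aa_ext
      intro m ts
      obtain ⟨ψ, hψ, k, hk1, hk2⟩ := h m ts (fun n => t' (φ (ns (θ n))))
      have hk : ∀ t, k t = Φ m ts (Θ t μ) := by
        intro t
        refine tendsto_nhds_unique (hk1 t) ?_
        have hsub : Tendsto (fun n => ns (θ (ψ n))) atTop atTop :=
          hns.comp (hθ.tendsto_atTop.comp hψ.tendsto_atTop)
        have := (((hΦ m ts).tendsto _).comp (hg t)).comp hsub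
        refine this.congr fun n => ?_
        simp only [Function.comp_apply, hΦL]
      have h3 := hk2 0
      simp only [hk, zero_sub] at h3
      have h4 := (((hΦ m ts).tendsto _).comp hν).comp hψ.tendsto_atTop
      have h5 : Φ m ts ν = Φ m ts (Lpath 0) := by
        rw [hΦL]
        exact tendsto_nhds_unique h4 h3
      exact congrArg ProbabilityMeasure.toMeasure h5
    rw [← hνL]
    exact hν
  refine ⟨φ, hφ, fun t => Θ t μ, hg, fun t => ?_⟩
  have := ((hΘ t).tendsto _).comp h0
  rw [hΘL, zero_add] at this
  refine this.congr fun n => ?_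
  simp only [Function.comp_apply, hΘΘ]
  congr 1
  ring
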